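/- Let Ω = ⋃_{j=1}^n (a_j, b_j) ⊆ ℝ be a finite union of bounded open intervals of total length 1 and let Λ ⊆ ℝ be a spectrum of Ω. Then there exists a finite T > 0 such that for every x ∈ ℝ the set φ(Λ ∩ (x, x+T)) spans the same linear subspace of ℂ^{2n} as φ(Λ), i.e., span φ(Λ ∩ (x, x+T)) = span φ(Λ). -/

import Mathlib

open MeasureTheory Set

/-- The exponential function `e_λ(x) = exp(2πiλx)`. -/
noncomputable def expF (lam : ℝ) : ℝ → ℂ :=
  fun x => Complex.exp (2 * (Real.pi : ℂ) * Complex.I * (lam : ℂ) * (x : ℂ))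

/-- `Λ` is a spectrum of `Ω`. -/
def IsSpectrum (Ω Λ : Set ℝ) : Prop :=
  ∃ F : Λ → Lp ℂ 2 (volume.restrict Ω),
    (∀ l : Λ, ⇑(F l) =ᵐ[volume.restrict Ω] expF (l : ℝ)) ∧
    Orthonormal ℂ F ∧
    (Submodule.span ℂ (Set.range F)).topologicalClosure = ⊤

/-- The map `φ : ℝ → ℂ^{2n}`,
`φ(x) = (e^{-2πi a_1 x}, …, e^{-2πi a_n x}, e^{-2πi b_1 x}, …, e^{-2πi b_n x})`. -/
noncomputable def phiMap (n : ℕ) (a b : Fin n → ℝ) (x : ℝ) : (Fin n → ℂ) × (Fin n → ℂ) :=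
  (fun j => Complex.exp (-(2 * (Real.pi : ℂ) * Complex.I * (a j : ℂ) * (x : ℂ))),
   fun j => Complex.exp (-(2 * (Real.pi : ℂ) * Complex.I * (b j : ℂ) * (x : ℂ))))

lemma expF_norm (l x : ℝ) : ‖expF l x‖ = 1 := by
  have : expF l x = Complex.exp (((2 * Real.pi * l * x : ℝ) : ℂ) * Complex.I) := by
    unfold expF; congr 1; push_cast; ring
  rw [this, Complex.norm_exp_ofReal_mul_I]

lemma expF_cont (l : ℝ) : Continuous (expF l) := by
  unfold expF; fun_prop

lemma expF_cont' (x : ℝ) : Continuous (fun l => expF l x) := by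
  unfold expF; fun_prop

lemma expF_add (l x y : ℝ) : expF l (x + y) = expF l x * expF l y := by
  unfold expF; rw [← Complex.exp_add]; congr 1; push_cast; ring

lemma expF_comm (l x : ℝ) : expF l x = expF x l := by
  unfold expF; congr 1; ring

lemma expF_zero (l : ℝ) : expF l 0 = 1 := by
  simp [expF]

lemma expF_sub_left (l m x : ℝ) : expF l x * star (expF m x) = expF (l - m) x := by
  unfold expF
  rw [Complex.star_def, ← Complex.exp_conj, ← Complex.exp_add]; congr 1
  simp only [map_mul, Complex.conj_ofReal, Complex.conj_I, map_ofNat]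
  push_cast; ring

def APd (f : ℝ → ℂ) : Prop :=
  ∃ G : Finset ℝ, ∀ ε > 0, ∃ δ > 0, ∀ s : ℝ, (∀ g ∈ G, ‖expF g s - 1‖ < δ) →
    ∀ u, ‖f (u + s) - f u‖ ≤ ε

lemma APd.char (c : ℂ) (g : ℝ) : APd (fun u => c * expF u g) := by
  refine ⟨{g}, fun ε hε => ⟨ε / (‖c‖ + 1), by positivity, fun s hs u => ?_⟩⟩
  have h := hs g (by simp)
  rw [lt_div_iff₀ (by positivity)] at h
  have : c * expF (u + s) g - c * expF u g = c * (expF g u * (expF g s - 1)) := by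
    rw [expF_comm (u+s), expF_comm u, expF_add]; ring
  rw [this, norm_mul, norm_mul, expF_norm, one_mul]
  nlinarith [norm_nonneg (expF g s - 1), norm_nonneg c]

lemma APd.add {f g : ℝ → ℂ} (hf : APd f) (hg : APd g) : APd (fun u => f u + g u) := by
  obtain ⟨F, hF⟩ := hf
  obtain ⟨G, hG⟩ := hg
  refine ⟨F ∪ G, fun ε hε => ?_⟩
  obtain ⟨d, hd, h1⟩ := hF (ε/2) (by positivity)
  obtain ⟨d', hd', h2⟩ := hG (ε/2) (by positivity)
  refine ⟨min d d', lt_min hd hd', fun s hs u => ?_⟩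
  have a1 := h1 s (fun g hg => (hs g (Finset.mem_union_left _ hg)).trans_le (min_le_left _ _)) u
  have a2 := h2 s (fun g hg => (hs g (Finset.mem_union_right _ hg)).trans_le (min_le_right _ _)) u
  calc _ = ‖(f (u+s) - f u) + (g (u+s) - g u)‖ := by congr 1; ring
    _ ≤ _ := (norm_add_le _ _).trans (by linarith)

lemma APd.neg {f : ℝ → ℂ} (hf : APd f) : APd (fun u => - f u) := by
  obtain ⟨F, hF⟩ := hf
  refine ⟨F, fun ε hε => ?_⟩
  obtain ⟨d, hd, h1⟩ := hF ε hε
  refine ⟨d, hd, fun s hs u => ?_⟩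
  have h := h1 s hs u
  rw [← norm_neg] at h
  have e : - f (u + s) - - f u = - (f (u + s) - f u) := by ring
  simp only [e]
  exact h

lemma expF_integrableOn (u : ℝ) {S : Set ℝ} (hS : volume S < ⊤) : IntegrableOn (expF u) S := by
  have : IsFiniteMeasure (volume.restrict S) := ⟨by simpa using hS⟩
  exact Integrable.of_bound (expF_cont u).aestronglyMeasurable 1
    (Filter.Eventually.of_forall fun x => (expF_norm u x).le)

lemma APd.interval (α β : ℝ) : APd (fun u => (u : ℂ) * ∫ x in Ioo α β, expF u x) := by
  rcases le_total β α with h | h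
  · rw [Ioo_eq_empty (not_lt.2 h)]
    refine ⟨∅, fun ε hε => ⟨1, one_pos, fun s _ u => by simpa using hε.le⟩⟩
  · have key : (fun u : ℝ => (u : ℂ) * ∫ x in Ioo α β, expF u x) =
        fun u => (1 / (2 * (Real.pi : ℂ) * Complex.I)) * expF u β +
          - ((1 / (2 * (Real.pi : ℂ) * Complex.I)) * expF u α) := by
      funext u
      by_cases hu : u = 0
      · simp [hu, expF]
      · rw [← integral_Ioc_eq_integral_Ioo, ← intervalIntegral.integral_of_le h]
        unfold expF
        have hpi : (Real.pi : ℂ) ≠ 0 := by exact_mod_cast Real.pi_ne_zero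
        have hu' : (u : ℂ) ≠ 0 := by exact_mod_cast hu
        rw [integral_exp_mul_complex (by simp [hu, Real.pi_ne_zero])]
        have := Complex.I_ne_zero
        field_simp
        ring
    rw [key]
    exact (APd.char _ _).add (APd.char _ _).neg

lemma APd.union {n : ℕ} (a b : Fin n → ℝ) (t : Finset (Fin n)) : ∀ α β : ℝ,
    APd (fun u => (u : ℂ) * ∫ x in Ioo α β ∩ ⋃ j ∈ t, Ioo (a j) (b j), expF u x) := by
  classical
  induction t using Finset.induction_on with
  | empty =>
    intro α β
    refine ⟨∅, fun ε hε => ⟨1, one_pos, fun s _ u => by simpa using hε.le⟩⟩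
  | insert j t hj ih =>
    intro α β
    have h1 := APd.interval (max α (a j)) (min β (b j))
    have h2 := ih α β
    have h3 := ih (max α (a j)) (min β (b j))
    convert (h1.add h2).add h3.neg using 2 with u
    set S := ⋃ j ∈ t, Ioo (a j) (b j) with hS
    have mS : MeasurableSet S := Finset.measurableSet_biUnion _ fun _ _ => measurableSet_Ioo
    rw [← Ioo_inter_Ioo]
    have e1 : Ioo α β ∩ ⋃ i ∈ insert j t, Ioo (a i) (b i) =
        (Ioo α β ∩ S) ∪ ((Ioo α β ∩ Ioo (a j) (b j)) \ S) := by
      rw [Finset.set_biUnion_insert]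
      ext x; simp only [← hS, mem_inter_iff, mem_union, mem_diff]; tauto
    have fin : ∀ A : Set ℝ, volume (Ioo α β ∩ A) < ⊤ := fun A =>
      (measure_mono inter_subset_left).trans_lt measure_Ioo_lt_top
    have mI : MeasurableSet (Ioo α β ∩ Ioo (a j) (b j)) := measurableSet_Ioo.inter measurableSet_Ioo
    have iI := expF_integrableOn u (fin (Ioo (a j) (b j)))
    rw [e1, setIntegral_union (by
      rw [Set.disjoint_left]; intro x hx hx'; exact hx'.2 hx.2) (mI.diff mS)
      (expF_integrableOn u (fin S)) (iI.mono_set diff_subset)]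
    have := integral_inter_add_diff (μ := volume) mS iI
    rw [← this]; ring

lemma almost_periods (G : Finset ℝ) (δ : ℝ) (hδ : 0 < δ) :
    ∃ L > 0, ∀ x : ℝ, ∃ s ∈ Ioo x (x + L), ∀ g ∈ G, ‖expF g s - 1‖ < δ := by
  let D : ℝ → (G → ℂ) := fun s g => expF g s
  have hb : Bornology.IsBounded (range D) := by
    refine (Metric.isBounded_closedBall (x := (0 : G → ℂ)) (r := 1)).subset ?_
    rintro _ ⟨s, rfl⟩
    rw [mem_closedBall_zero_iff, pi_norm_le_iff_of_nonneg zero_le_one]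
    intro g; exact (expF_norm _ _).le
  have ht : TotallyBounded (range D) :=
    hb.isCompact_closure.totallyBounded.subset subset_closure
  obtain ⟨t, hts, htf, hcov⟩ := Metric.finite_approx_of_totallyBounded ht δ hδ
  obtain ⟨q, hq, hqt⟩ : ∃ q : Set ℝ, q.Finite ∧ D '' q = t := by
    have hts' : ∀ y ∈ t, ∃ x, D x = y := fun y hy => hts hy
    choose! r hr using hts'
    refine ⟨r '' t, htf.image r, ?_⟩
    ext y
    constructor
    · rintro ⟨_, ⟨z, hz, rfl⟩, rfl⟩; rw [hr z hz]; exact hz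
    · intro hy; exact ⟨r y, ⟨y, hy, rfl⟩, hr y hy⟩
  obtain ⟨M, hM⟩ := hq.isBounded.exists_norm_le
  refine ⟨2 * (|M| + 1), by positivity, fun x => ?_⟩
  have hx := hcov (mem_range_self (x + (|M| + 1)))
  simp only [mem_iUnion, exists_prop, ← hqt] at hx
  obtain ⟨_, ⟨r, hr, rfl⟩, hxr⟩ := hx
  have h1 := hM r hr
  rw [Real.norm_eq_abs] at h1
  have h2 := abs_le.1 (h1.trans (le_abs_self M))
  refine ⟨x + (|M| + 1) - r, ⟨by linarith, by linarith⟩, fun g hg => ?_⟩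
  have h3 : dist (D (x + (|M|+1)) ⟨g, hg⟩) (D r ⟨g, hg⟩) < δ := (dist_le_pi_dist _ _ _).trans_lt hxr
  rw [dist_eq_norm] at h3
  have h4 : D (x + (|M|+1)) ⟨g, hg⟩ - D r ⟨g, hg⟩ =
      expF g r * (expF g (x + (|M| + 1) - r) - 1) := by
    rw [mul_sub, ← expF_add]; simp [D]
  rwa [h4, norm_mul, expF_norm, one_mul] at h3

/-- Fourier transform facts extracted from a spectrum. -/
lemma spectrum_facts {Ω Λ : Set ℝ} (hm : MeasurableSet Ω) (hvol : volume Ω = 1)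
    (hΛ : IsSpectrum Ω Λ) :
    (∀ l ∈ Λ, ∀ m ∈ Λ, l ≠ m → ∫ x in Ω, expF (l - m) x = 0) ∧
    (∀ t : ℝ, HasSum (fun l : Λ => ‖∫ x in Ω, expF (t - l) x‖ ^ 2) 1) := by
  obtain ⟨F, hF, hon, hd⟩ := hΛ
  have : IsFiniteMeasure (volume.restrict Ω) := ⟨by simp [hvol]⟩
  have hmem : ∀ t, MemLp (expF t) 2 (volume.restrict Ω) := fun t =>
    MemLp.of_bound (expF_cont t).aestronglyMeasurable 1
      (Filter.Eventually.of_forall fun x => (expF_norm t x).le)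
  have hin : ∀ (f g : Lp ℂ 2 (volume.restrict Ω)) (s t : ℝ), ⇑f =ᵐ[volume.restrict Ω] expF s →
      ⇑g =ᵐ[volume.restrict Ω] expF t → inner ℂ f g = ∫ x in Ω, expF (t - s) x := by
    intro f g s t hf hg
    rw [L2.inner_def]
    apply integral_congr_ae
    filter_upwards [hf, hg] with x h1 h2
    rw [h1, h2, ← expF_sub_left]
    simp
  constructor
  · intro l hl m hm hlm
    rw [← hin (F ⟨m, hm⟩) (F ⟨l, hl⟩) m l (hF _) (hF _)]
    exact hon.2 (by simpa using hlm.symm)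
  · intro t
    let B := HilbertBasis.mk hon hd.ge
    let f := (hmem t).toLp
    have hf : ⇑f =ᵐ[volume.restrict Ω] expF t := (hmem t).coeFn_toLp
    have h := B.hasSum_inner_mul_inner f f
    have hff : inner ℂ f f = (1 : ℂ) := by
      rw [hin f f t t hf hf]; simp [expF, hvol, Measure.real]
    rw [hff] at h
    have h2 := (Complex.hasSum_re h)
    convert h2 using 2 with l
    · rw [← inner_conj_symm f (B l), hin (B l) f l t (by
        simp only [B, HilbertBasis.coe_mk]; exact hF l) hf]
      rw [← Complex.normSq_eq_conj_mul_self, Complex.ofReal_re, Complex.normSq_eq_norm_sq]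
    · simp

lemma separation {Ω Λ : Set ℝ} (hvol : volume Ω = 1)
    (h : ∀ l ∈ Λ, ∀ m ∈ Λ, l ≠ m → ∫ x in Ω, expF (l - m) x = 0) :
    ∃ d > 0, ∀ l ∈ Λ, ∀ m ∈ Λ, l ≠ m → d ≤ |l - m| := by
  have : IsFiniteMeasure (volume.restrict Ω) := ⟨by simp [hvol]⟩
  have hc : Continuous (fun u => ∫ x in Ω, expF u x) := by
    apply continuous_of_dominated (bound := fun _ => 1)
    · exact fun u => (expF_cont u).aestronglyMeasurable
    · exact fun u => Filter.Eventually.of_forall fun x => (expF_norm u x).le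
    · exact integrable_const _
    · exact Filter.Eventually.of_forall fun x => expF_cont' x
  have h0 : (∫ x in Ω, expF 0 x) ≠ 0 := by simp [expF, hvol, Measure.real]
  have := hc.continuousAt.eventually_ne h0
  obtain ⟨d, hd, hd2⟩ := Metric.eventually_nhds_iff.1 this
  refine ⟨d, hd, fun l hl m hm hlm => ?_⟩
  by_contra! hlt
  exact hd2 (y := l - m) (by simpa [Real.dist_eq] using hlt) (h l hl m hm hlm)

lemma sum_bound {Λ : Set ℝ} {d : ℝ} (hd : 0 < d)
    (hsep : ∀ l ∈ Λ, ∀ m ∈ Λ, l ≠ m → d ≤ |l - m|) {η : ℝ} (hη : 0 < η) :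
    ∃ δ > 0, ∀ (f : ℝ → ℂ) (t : ℝ), HasSum (fun l : Λ => ‖f (t - l)‖ ^ 2) 1 →
      (∀ l ∈ Λ, ‖((t - l : ℝ) : ℂ) * f (t - l)‖ ≤ δ) → ∃ l ∈ Λ, |l - t| < η := by
  have hs : Summable (fun k : ℤ => (1 : ℝ) / (1 + |(k : ℝ)|) ^ 2) := by
    have h1 : Summable (fun k : ℕ => (1 : ℝ) / (1 + (k:ℝ)) ^ 2) := by
      have := (summable_nat_add_iff 1).2 (Real.summable_one_div_nat_pow.2 (one_lt_two))
      refine this.congr fun k => ?_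
      push_cast; rw [add_comm]
    refine Summable.of_nat_of_neg ?_ ?_
    · simpa using h1
    · simpa using h1
  set M := ∑' k : ℤ, (1 : ℝ) / (1 + |(k : ℝ)|) ^ 2
  have hM : 0 ≤ M := tsum_nonneg fun k => by positivity
  set C := (1 + 2 * d / η) / d with hC
  have hCpos : 0 < C := by positivity
  refine ⟨1 / (C * (M + 1)), by positivity, fun f t hsum hbd => ?_⟩
  by_contra! hfar
  set δ := 1 / (C * (M + 1)) with hδ
  let K : Λ → ℤ := fun l => ⌊((l : ℝ) - t) / d⌋
  have hK : Function.Injective K := by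
    intro l m hlm
    by_contra hne
    have h1 := hsep l l.2 m m.2 (fun h => hne (Subtype.ext h))
    have h2 := Int.abs_sub_lt_one_of_floor_eq_floor hlm
    rw [← sub_div, abs_div, abs_of_pos hd, div_lt_one hd] at h2
    simp only [sub_sub_sub_cancel_right] at h2
    linarith
  have hterm : ∀ l : Λ, ‖f (t - l)‖ ^ 2 ≤ (δ * C) ^ 2 * (1 / (1 + |(K l : ℝ)|) ^ 2) := by
    intro l
    have h1 := hbd l l.2
    have h2 := hfar l l.2
    rw [norm_mul, Complex.norm_real, Real.norm_eq_abs, abs_sub_comm] at h1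
    set r := |(l : ℝ) - t| with hr
    have h3 : 1 + |(K l : ℝ)| ≤ C * r := by
      have f1 := Int.floor_le (((l : ℝ) - t) / d)
      have f2 := Int.lt_floor_add_one (((l : ℝ) - t) / d)
      have f3 : |(K l : ℝ)| ≤ |((l : ℝ) - t) / d| + 1 := by
        have : |(K l : ℝ) - ((l : ℝ) - t) / d| ≤ 1 := by
          rw [abs_le]; constructor <;> simp only [K] <;> linarith
        calc |(K l : ℝ)| = |((K l : ℝ) - ((l : ℝ) - t) / d) + ((l : ℝ) - t) / d| := by ring_nf
          _ ≤ _ := (abs_add_le _ _).trans (by linarith)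
      rw [abs_div, abs_of_pos hd] at f3
      have f4 : C * r = r / d + 2 * (r / η) := by rw [hC]; field_simp
      have f5 : 1 ≤ r / η := (one_le_div hη).2 h2
      rw [f4]; linarith
    have hk : 0 < 1 + |(K l : ℝ)| := by positivity
    have h4 : ‖f (t - l)‖ * (1 + |(K l : ℝ)|) ≤ δ * C := by
      calc _ ≤ ‖f (t - l)‖ * (C * r) := by gcongr
        _ = (r * ‖f (t - l)‖) * C := by ring
        _ ≤ _ := by gcongr
    have h5 : ‖f (t - l)‖ ≤ (δ * C) / (1 + |(K l : ℝ)|) := (le_div_iff₀ hk).2 h4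
    calc _ ≤ ((δ * C) / (1 + |(K l : ℝ)|)) ^ 2 := by gcongr
      _ = _ := by rw [div_pow]; ring
  have hs2 := (hs.comp_injective hK)
  have h6 : (1 : ℝ) ≤ (δ * C) ^ 2 * M := by
    have h7 := hasSum_le hterm hsum (hs2.mul_left ((δ * C) ^ 2)).hasSum
    rw [tsum_mul_left] at h7
    refine h7.trans ?_
    gcongr
    exact tsum_comp_le_tsum_of_inj hs (fun k => by positivity) hK
  have h8 : δ * C = 1 / (M + 1) := by rw [hδ]; field_simp
  rw [h8, div_pow, one_pow, div_mul_eq_mul_div, one_mul, le_div_iff₀ (by positivity)] at h6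
  nlinarith

/-- There is a window length `T` such that every window `Λ ∩ (x, x+T)` is a
generating set: `span φ(Λ ∩ (x, x+T)) = span φ(Λ)`. -/
theorem window_generates (n : ℕ) (a b : Fin n → ℝ) (Ω : Set ℝ)
    (hΩ : Ω = ⋃ j, Ioo (a j) (b j))
    (hvol : volume Ω = 1)
    (Λ : Set ℝ) (hΛ : IsSpectrum Ω Λ) :
    ∃ T : ℝ, 0 < T ∧ ∀ x : ℝ,
      Submodule.span ℂ (phiMap n a b '' (Λ ∩ Ioo x (x + T)))
        = Submodule.span ℂ (phiMap n a b '' Λ) := by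
  classical
  have hm : MeasurableSet Ω := by
    rw [hΩ]; exact MeasurableSet.iUnion fun _ => measurableSet_Ioo
  obtain ⟨hort, hpars⟩ := spectrum_facts hm hvol hΛ
  obtain ⟨d, hd, hsep⟩ := separation hvol hort
  -- the function u * hat(u) is almost periodic
  have hAP : APd (fun u => (u : ℂ) * ∫ x in Ω, expF u x) := by
    have hbd : Bornology.IsBounded Ω := by
      rw [hΩ]; exact (Bornology.isBounded_iUnion).2 fun j => Metric.isBounded_Ioo _ _
    obtain ⟨R, hR⟩ := hbd.exists_norm_le
    have e : Ioo (-(R+1)) (R+1) ∩ ⋃ j ∈ (Finset.univ : Finset (Fin n)), Ioo (a j) (b j) = Ω := by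
      simp only [Finset.mem_univ, iUnion_true, ← hΩ]
      apply inter_eq_self_of_subset_right
      intro x hx
      have := abs_le.1 (hR x hx)
      exact ⟨by linarith, by linarith⟩
    have := APd.union a b Finset.univ (-(R+1)) (R+1)
    rwa [e] at this
  -- basis
  obtain ⟨B, hBs, hBspan, hBli⟩ := exists_linearIndependent ℂ (phiMap n a b '' Λ)
  have hBfin : Finite B := hBli.finite
  have : Fintype B := Fintype.ofFinite B
  choose! lam hlam hlam2 using fun v (hv : v ∈ B) => hBs hv
  have hopen := isOpen_setOf_linearIndependent (𝕜 := ℂ) (E := (Fin n → ℂ) × (Fin n → ℂ)) (ι := B)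
  obtain ⟨ε, hε, hball⟩ := Metric.isOpen_iff.1 hopen _ hBli
  -- perturbation constant
  let fr : Finset ℝ := (Finset.univ.image fun j => -a j) ∪ (Finset.univ.image fun j => -b j)
  have hphi1 : ∀ j x, (phiMap n a b x).1 j = expF (-a j) x := by
    intro j x; simp only [phiMap, expF]; congr 1; push_cast; ring
  have hphi2 : ∀ j x, (phiMap n a b x).2 j = expF (-b j) x := by
    intro j x; simp only [phiMap, expF]; congr 1; push_cast; ring
  have hdist : ∀ x s r, 0 ≤ r → (∀ g ∈ fr, ‖expF g s - 1‖ ≤ r) →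
      dist (phiMap n a b (x + s)) (phiMap n a b x) ≤ r := by
    intro x s r hr h
    rw [Prod.dist_eq]
    have aux : ∀ g ∈ fr, dist (expF g (x + s)) (expF g x) ≤ r := by
      intro g hg
      rw [dist_eq_norm, expF_add, ← mul_sub_one, norm_mul, expF_norm, one_mul]
      exact h g hg
    refine max_le ((dist_pi_le_iff hr).2 fun j => ?_) ((dist_pi_le_iff hr).2 fun j => ?_)
    · rw [hphi1, hphi1]; exact aux _ (by simp [fr])
    · rw [hphi2, hphi2]; exact aux _ (by simp [fr])
  obtain ⟨η, hη, hηs⟩ : ∃ η > 0, ∀ s : ℝ, |s| < η → ∀ g ∈ fr, ‖expF g s - 1‖ ≤ ε / 4 := by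
    have : ∀ᶠ s in nhds (0:ℝ), ∀ g ∈ fr, ‖expF g s - 1‖ < ε / 4 := by
      rw [Filter.eventually_all_finset]
      intro g _
      have hc : Continuous (fun s => ‖expF g s - 1‖) := ((expF_cont g).sub continuous_const).norm
      exact hc.continuousAt.eventually_lt_const (by simpa [expF_zero] using (by positivity))
    obtain ⟨η, hη, h⟩ := Metric.eventually_nhds_iff.1 this
    exact ⟨η, hη, fun s hs g hg => (h (by simpa [Real.dist_eq] using hs) g hg).le⟩
  obtain ⟨δ, hδ, hfind⟩ := sum_bound hd hsep hη
  obtain ⟨G, hG⟩ := hAP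
  obtain ⟨δ', hδ', hG'⟩ := hG δ hδ
  obtain ⟨L, hL, hLs⟩ := almost_periods (G ∪ fr) (min δ' (ε / 4)) (by positivity)
  -- every window contains near-returns
  have hret : ∀ l ∈ Λ, ∀ x : ℝ, ∃ m ∈ Λ ∩ Ioo x (x + (L + 2 * η)),
      dist (phiMap n a b m) (phiMap n a b l) < ε := by
    intro l hl x
    obtain ⟨s, ⟨hs1, hs2⟩, hs⟩ := hLs (x + η - l)
    obtain ⟨m, hm, hmt⟩ := hfind (fun u => ∫ x in Ω, expF u x) (l + s) (hpars _) (by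
      intro m hm
      have h1 := hG' s (fun g hg => (hs g (Finset.mem_union_left _ hg)).trans_le (min_le_left _ _))
        (l - m)
      have h2 : ((l - m : ℝ) : ℂ) * ∫ x in Ω, expF (l - m) x = 0 := by
        by_cases h : l = m
        · simp [h]
        · rw [hort l hl m hm h, mul_zero]
      simp only [h2, sub_zero] at h1
      rwa [show l - m + s = l + s - m by ring] at h1)
    have hmt' := abs_lt.1 hmt
    refine ⟨m, ⟨hm, by linarith, by linarith⟩, ?_⟩
    have h1 := hdist l s (ε/4) (by positivity) (fun g hg =>
      ((hs g (Finset.mem_union_right _ hg)).trans_le (min_le_right _ _)).le)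
    have h2 := hdist (l + s) (m - (l + s)) (ε/4) (by positivity) (hηs _ hmt)
    rw [add_sub_cancel] at h2
    have := dist_triangle (phiMap n a b m) (phiMap n a b (l+s)) (phiMap n a b l)
    linarith
  refine ⟨L + 2 * η, by positivity, fun x => ?_⟩
  choose ret hret1 hret2 using fun v : B => hret (lam v) (hlam v v.2) x
  have hli : LinearIndependent ℂ (fun v : B => phiMap n a b (ret v)) := by
    apply hball
    rw [Metric.mem_ball, dist_pi_lt_iff hε]
    intro v
    have := hret2 v
    rwa [hlam2 v v.2] at this
  apply le_antisymm (Submodule.span_mono (image_mono inter_subset_left))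
  have hsub : Submodule.span ℂ (range fun v : B => phiMap n a b (ret v)) ≤
      Submodule.span ℂ (phiMap n a b '' (Λ ∩ Ioo x (x + (L + 2 * η)))) := by
    apply Submodule.span_mono
    rintro _ ⟨v, rfl⟩
    exact mem_image_of_mem _ (hret1 v)
  refine le_trans (le_of_eq ?_) hsub
  symm
  apply Submodule.eq_of_le_of_finrank_eq
  · exact hsub.trans (Submodule.span_mono (image_mono inter_subset_left))
  · rw [finrank_span_eq_card hli, ← hBspan]
    have := finrank_span_eq_card hBli
    rw [Subtype.range_coe] at this
    exact this.symm
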